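/- Let a, b : ℝ² → ℝ² be continuously differentiable vector fields with compact support, and let c ∈ ℝ² be a constant vector. Then the Newton-linearized EMAC trilinear term vanishes: b_emac(a,b,c) + b_emac(b,a,c) − b_emac(a,a,c) = 0. -/

import Mathlib

open MeasureTheory RealInnerProductSpace

noncomputable section

abbrev E2 := EuclideanSpace ℝ (Fin 2)

/-- divergence of a vector field on ℝ² -/
def dvg (u : E2 → E2) (x : E2) : ℝ :=
  ∑ i, fderiv ℝ u x (EuclideanSpace.single i 1) i

/-- convective trilinear form  b_conv(u,v,w) = ∫ ((u·∇)v)·w -/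
def bConv (u v w : E2 → E2) : ℝ :=
  ∫ x, ⟪fderiv ℝ v x (u x), w x⟫

/-- EMAC trilinear form  b_emac(u,v,w) = ∫ (2D(u)v)·w + (∇·u)(v·w),
where (2D(u)v)·w = (∇u v)·w + (∇u w)·v. -/
def bEmac (u v w : E2 → E2) : ℝ :=
  ∫ x, (⟪fderiv ℝ u x (v x), w x⟫ + ⟪fderiv ℝ u x (w x), v x⟫
    + dvg u x * ⟪v x, w x⟫)

/-- L² norm -/
def l2Norm {F : Type*} [NormedAddCommGroup F] (f : E2 → F) : ℝ :=
  (∫ x, ‖f x‖ ^ 2) ^ ((1 : ℝ) / 2)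

/-- H¹ norm -/
def h1Norm (f : E2 → E2) : ℝ := l2Norm f + l2Norm (fderiv ℝ f)

/-- H² norm -/
def h2Norm (f : E2 → E2) : ℝ :=
  l2Norm f + l2Norm (fderiv ℝ f) + l2Norm (fderiv ℝ (fderiv ℝ f))

/-- rotational field φ(x₁,x₂) = (−x₂, x₁) -/
def phi : E2 → E2 := fun x => (WithLp.equiv 2 (Fin 2 → ℝ)).symm ![-x 1, x 0]

/-!
For `C¹` fields `u`, `v`, `w` the EMAC densities of `(u, v, w)`, `(v, u, w)` and `(w, u, v)` add up
to the divergence of `⟪v, w⟫ u + ⟪u, w⟫ v + ⟪u, v⟫ w`, whose integral vanishes as soon as one of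
the three fields has compact support. If `Dw` is skew-symmetric everywhere, as for a constant field
or an infinitesimal rotation, then `D(w) = 0` and `∇ · w = 0`, so the `(w, u, v)` density drops out
and `b_emac(u, v, w) + b_emac(v, u, w) = 0`. The case `v = u` gives `b_emac(u, u, w) = 0`.
-/

section Divergence

variable {E F : Type*} [NormedAddCommGroup E] [NormedSpace ℝ E]
  [NormedAddCommGroup F] [NormedSpace ℝ F]

/-- The divergence of a vector field on a real normed space, as the basis-free trace of its
derivative. It has the junk value `0` where the field is not differentiable or `E` is not
finite-dimensional. -/
def divergence (u : E → E) (x : E) : ℝ :=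
  LinearMap.trace ℝ E (fderiv ℝ u x)

theorem divergence_add {u v : E → E} {x : E} (hu : DifferentiableAt ℝ u x)
    (hv : DifferentiableAt ℝ v x) :
    divergence (u + v) x = divergence u x + divergence v x := by
  simp only [divergence, fderiv_add hu hv, ContinuousLinearMap.toLinearMap_add, map_add]

variable [FiniteDimensional ℝ E]

theorem divergence_smul {f : E → ℝ} {u : E → E} {x : E} (hf : DifferentiableAt ℝ f x)
    (hu : DifferentiableAt ℝ u x) :
    divergence (f • u) x = f x * divergence u x + fderiv ℝ f x (u x) := by
  have trace_smulRight : LinearMap.trace ℝ E ((fderiv ℝ f x).smulRight (u x)) =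
      fderiv ℝ f x (u x) :=
    LinearMap.trace_smulRight (fderiv ℝ f x : E →ₗ[ℝ] ℝ) (u x)
  simp only [divergence, fderiv_smul hf hu, ContinuousLinearMap.toLinearMap_add,
    ContinuousLinearMap.toLinearMap_smul, map_add, map_smul, smul_eq_mul, trace_smulRight]

variable (E) in
/-- The trace as a continuous linear functional on the endomorphisms of a finite-dimensional normed
space; it lets the trace be exchanged with integrals of operator-valued functions. -/
def traceCLM : (E →L[ℝ] E) →L[ℝ] ℝ :=
  LinearMap.toContinuousLinearMap (LinearMap.trace ℝ E ∘ₗ ContinuousLinearMap.coeLM ℝ)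

theorem divergence_eq_traceCLM_comp_fderiv (u : E → E) :
    divergence u = traceCLM E ∘ fderiv ℝ u :=
  rfl

theorem continuous_divergence {u : E → E} (hu : ContDiff ℝ 1 u) : Continuous (divergence u) := by
  rw [divergence_eq_traceCLM_comp_fderiv]
  exact (traceCLM E).continuous.comp (hu.continuous_fderiv one_ne_zero)

variable [MeasurableSpace E] [BorelSpace E] (μ : Measure E) [μ.IsAddHaarMeasure]

theorem integral_fderiv_eq_zero_of_hasCompactSupport {f : E → F} (hf : ContDiff ℝ 1 f)
    (hf_supp : HasCompactSupport f) : ∫ x, fderiv ℝ f x ∂μ = 0 := by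
  have integrable_f : Integrable f μ := hf.continuous.integrable_of_hasCompactSupport hf_supp
  have integrable_fderiv : Integrable (fderiv ℝ f) μ :=
    (hf.continuous_fderiv one_ne_zero).integrable_of_hasCompactSupport (hf_supp.fderiv ℝ)
  ext v
  rw [ContinuousLinearMap.integral_apply integrable_fderiv]
  simpa using integral_smul_fderiv_eq_neg_fderiv_smul_of_integrable (μ := μ) (v := v)
    (f := fun _ ↦ (1 : ℝ)) (g := f) (by simp)
    (by simpa using integrable_fderiv.apply_continuousLinearMap v)
    (by simpa using integrable_f) (fun x _ ↦ by fun_prop)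
    (fun x _ ↦ hf.differentiable one_ne_zero x)

theorem integral_divergence_eq_zero_of_hasCompactSupport {u : E → E} (hu : ContDiff ℝ 1 u)
    (hu_supp : HasCompactSupport u) : ∫ x, divergence u x ∂μ = 0 := by
  have integrable_fderiv : Integrable (fderiv ℝ u) μ :=
    (hu.continuous_fderiv one_ne_zero).integrable_of_hasCompactSupport (hu_supp.fderiv ℝ)
  simp only [divergence_eq_traceCLM_comp_fderiv, Function.comp_apply]
  rw [(traceCLM E).integral_comp_comm integrable_fderiv,
    integral_fderiv_eq_zero_of_hasCompactSupport μ hu hu_supp, map_zero]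

end Divergence

section Emac

variable {E : Type*} [NormedAddCommGroup E] [InnerProductSpace ℝ E] {u v w : E → E}

/-- The integrand `(2 D(u) v) · w + (∇ · u) (v · w)` of the EMAC trilinear form, with the symmetric
gradient written out as `(2 D(u) v) · w = (∇u v) · w + (∇u w) · v`. -/
def emacDensity (u v w : E → E) (x : E) : ℝ :=
  ⟪fderiv ℝ u x (v x), w x⟫ + ⟪fderiv ℝ u x (w x), v x⟫ + divergence u x * ⟪v x, w x⟫

/-- The EMAC trilinear form `∫ (2 D(u) v) · w + (∇ · u) (v · w)` on a space of any dimension, for an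
arbitrary measure. -/
def emacForm [MeasurableSpace E] (μ : Measure E) (u v w : E → E) : ℝ :=
  ∫ x, emacDensity u v w x ∂μ

/-- The field `(v · w) u + (u · w) v + (u · v) w`, whose divergence is the sum of the EMAC densities
of `u`, `v`, `w` with each field in turn as the differentiated one. -/
def emacFlux (u v w : E → E) : E → E :=
  (fun x ↦ ⟪v x, w x⟫) • u + (fun x ↦ ⟪u x, w x⟫) • v + (fun x ↦ ⟪u x, v x⟫) • w

theorem support_emacFlux_subset : Function.support (emacFlux u v w) ⊆ Function.support u := by
  intro x
  contrapose
  intro hx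
  have u_eq_zero : u x = 0 := Function.notMem_support.mp hx
  simp [emacFlux, u_eq_zero]

theorem contDiff_emacFlux {n : WithTop ℕ∞} (hu : ContDiff ℝ n u) (hv : ContDiff ℝ n v)
    (hw : ContDiff ℝ n w) : ContDiff ℝ n (emacFlux u v w) :=
  (((hv.inner ℝ hw).smul hu).add ((hu.inner ℝ hw).smul hv)).add ((hu.inner ℝ hv).smul hw)

theorem support_emacDensity_subset_tsupport_left :
    Function.support (emacDensity u v w) ⊆ tsupport u := by
  intro x
  contrapose
  intro hx
  have fderiv_eq_zero : fderiv ℝ u x = 0 := fderiv_of_notMem_tsupport ℝ hx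
  simp [emacDensity, divergence, fderiv_eq_zero]

theorem support_emacDensity_subset_support_middle :
    Function.support (emacDensity u v w) ⊆ Function.support v := by
  intro x
  contrapose
  intro hx
  have v_eq_zero : v x = 0 := Function.notMem_support.mp hx
  simp [emacDensity, v_eq_zero]

variable [FiniteDimensional ℝ E]

theorem divergence_eq_zero_of_skew {x : E} (hw : ∀ y, ⟪fderiv ℝ w x y, y⟫ = 0) :
    divergence w x = 0 := by
  rw [divergence, LinearMap.trace_eq_sum_inner _ (stdOrthonormalBasis ℝ E)]
  exact Finset.sum_eq_zero fun i _ ↦ (real_inner_comm _ _).trans (hw _)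

theorem emacDensity_eq_zero_of_skew {x : E} (hw : ∀ y, ⟪fderiv ℝ w x y, y⟫ = 0) :
    emacDensity w u v x = 0 := by
  have polarized : ⟪fderiv ℝ w x (u x), v x⟫ + ⟪fderiv ℝ w x (v x), u x⟫ = 0 := by
    have h := hw (u x + v x)
    simp only [map_add, inner_add_left, inner_add_right, hw] at h
    linarith
  rw [emacDensity, polarized, divergence_eq_zero_of_skew hw, zero_mul, add_zero]

theorem continuous_emacDensity (hu : ContDiff ℝ 1 u) (hv : Continuous v) (hw : Continuous w) :
    Continuous (emacDensity u v w) := by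
  have continuous_div : Continuous (divergence u) := continuous_divergence hu
  unfold emacDensity
  fun_prop

theorem divergence_inner_smul {x : E} (hu : DifferentiableAt ℝ u x) (hv : DifferentiableAt ℝ v x)
    (hw : DifferentiableAt ℝ w x) :
    divergence ((fun y ↦ ⟪u y, v y⟫) • w) x =
      ⟪u x, v x⟫ * divergence w x + ⟪fderiv ℝ u x (w x), v x⟫ + ⟪fderiv ℝ v x (w x), u x⟫ := by
  rw [divergence_smul (hu.inner ℝ hv) hw, fderiv_inner_apply ℝ hu hv,
    real_inner_comm (fderiv ℝ v x (w x))]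
  ring

theorem divergence_emacFlux {x : E} (hu : DifferentiableAt ℝ u x)
    (hv : DifferentiableAt ℝ v x) (hw : DifferentiableAt ℝ w x) :
    divergence (emacFlux u v w) x =
      emacDensity u v w x + emacDensity v u w x + emacDensity w u v x := by
  have hu' := (hv.inner ℝ hw).smul hu
  have hv' := (hu.inner ℝ hw).smul hv
  have hw' := (hu.inner ℝ hv).smul hw
  rw [emacFlux, divergence_add (hu'.add hv') hw', divergence_add hu' hv',
    divergence_inner_smul hv hw hu, divergence_inner_smul hu hw hv, divergence_inner_smul hu hv hw]
  simp only [emacDensity]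
  ring

variable [MeasurableSpace E] [BorelSpace E]

theorem integrable_emacDensity_of_hasCompactSupport_left {μ : Measure E}
    [IsFiniteMeasureOnCompacts μ] (hu : ContDiff ℝ 1 u) (hv : Continuous v) (hw : Continuous w)
    (hu_supp : HasCompactSupport u) : Integrable (emacDensity u v w) μ :=
  (continuous_emacDensity hu hv hw).integrable_of_hasCompactSupport
    (hu_supp.mono' support_emacDensity_subset_tsupport_left)

theorem integrable_emacDensity_of_hasCompactSupport_middle {μ : Measure E}
    [IsFiniteMeasureOnCompacts μ] (hu : ContDiff ℝ 1 u) (hv : Continuous v) (hw : Continuous w)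
    (hv_supp : HasCompactSupport v) : Integrable (emacDensity u v w) μ :=
  (continuous_emacDensity hu hv hw).integrable_of_hasCompactSupport
    (hv_supp.mono support_emacDensity_subset_support_middle)

variable (μ : Measure E) [μ.IsAddHaarMeasure]

theorem emacForm_add_emacForm_add_emacForm_eq_zero (hu : ContDiff ℝ 1 u) (hv : ContDiff ℝ 1 v)
    (hw : ContDiff ℝ 1 w) (hu_supp : HasCompactSupport u) :
    emacForm μ u v w + emacForm μ v u w + emacForm μ w u v = 0 := by
  have integrable_uvw : Integrable (emacDensity u v w) μ :=
    integrable_emacDensity_of_hasCompactSupport_left hu hv.continuous hw.continuous hu_supp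
  have integrable_vuw : Integrable (emacDensity v u w) μ :=
    integrable_emacDensity_of_hasCompactSupport_middle hv hu.continuous hw.continuous hu_supp
  have integrable_wuv : Integrable (emacDensity w u v) μ :=
    integrable_emacDensity_of_hasCompactSupport_middle hw hu.continuous hv.continuous hu_supp
  calc emacForm μ u v w + emacForm μ v u w + emacForm μ w u v
      = ∫ x, (emacDensity u v w x + emacDensity v u w x + emacDensity w u v x) ∂μ := by
        simp only [emacForm]
        rw [integral_add _ integrable_wuv, integral_add integrable_uvw integrable_vuw]
        exact integrable_uvw.add integrable_vuw
    _ = ∫ x, divergence (emacFlux u v w) x ∂μ :=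
        integral_congr_ae <| .of_forall fun x ↦
          (divergence_emacFlux (hu.differentiable one_ne_zero x)
            (hv.differentiable one_ne_zero x) (hw.differentiable one_ne_zero x)).symm
    _ = 0 := integral_divergence_eq_zero_of_hasCompactSupport μ (contDiff_emacFlux hu hv hw)
        (hu_supp.mono support_emacFlux_subset)

theorem emacForm_add_emacForm_swap_eq_zero_of_skew (hu : ContDiff ℝ 1 u) (hv : ContDiff ℝ 1 v)
    (hw : ContDiff ℝ 1 w) (hu_supp : HasCompactSupport u)
    (hw_skew : ∀ x y, ⟪fderiv ℝ w x y, y⟫ = 0) :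
    emacForm μ u v w + emacForm μ v u w = 0 := by
  have emacForm_w : emacForm μ w u v = 0 :=
    integral_eq_zero_of_ae (.of_forall fun x ↦ emacDensity_eq_zero_of_skew (hw_skew x))
  simpa only [emacForm_w, add_zero] using
    emacForm_add_emacForm_add_emacForm_eq_zero μ hu hv hw hu_supp

theorem newton_emac_const_eq_zero_general {a b : E → E} (ha : ContDiff ℝ 1 a) (hb : ContDiff ℝ 1 b)
    (hw : ContDiff ℝ 1 w) (ha_supp : HasCompactSupport a)
    (hw_skew : ∀ x y, ⟪fderiv ℝ w x y, y⟫ = 0) :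
    emacForm μ a b w + emacForm μ b a w - emacForm μ a a w = 0 := by
  have cross : emacForm μ a b w + emacForm μ b a w = 0 :=
    emacForm_add_emacForm_swap_eq_zero_of_skew μ ha hb hw ha_supp hw_skew
  have diagonal : emacForm μ a a w + emacForm μ a a w = 0 :=
    emacForm_add_emacForm_swap_eq_zero_of_skew μ ha ha hw ha_supp hw_skew
  linarith

end Emac

theorem dvg_eq_divergence (u : E2 → E2) (x : E2) : dvg u x = divergence u x := by
  rw [dvg, divergence, LinearMap.trace_eq_sum_inner _ (EuclideanSpace.basisFun (Fin 2) ℝ)]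
  simp [EuclideanSpace.inner_single_left]

theorem bEmac_eq_emacForm (u v w : E2 → E2) : bEmac u v w = emacForm volume u v w := by
  simp only [bEmac, emacForm, emacDensity, dvg_eq_divergence]

theorem newton_emac_const_eq_zero
    (a b : E2 → E2)
    (ha : ContDiff ℝ 1 a) (hb : ContDiff ℝ 1 b)
    (hca : HasCompactSupport a) (hcb : HasCompactSupport b)
    (c : E2) :
    bEmac a b (fun _ => c) + bEmac b a (fun _ => c) - bEmac a a (fun _ => c) = 0 := by
  simp only [bEmac_eq_emacForm]
  exact newton_emac_const_eq_zero_general volume ha hb contDiff_const hca (by simp)
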